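/- Let γ : [a, b] → ℂ (a < b) be a piecewise continuously differentiable curve and let f, g : ℂ → ℂ be continuous and nowhere-vanishing on an open set containing the image of γ. Then the complex multiplicative integral satisfies the division property as a set equality: MInt(f/g, γ) = { w₁ / w₂ : w₁ ∈ MInt(f, γ), w₂ ∈ MInt(g, γ) }. -/

import Mathlib

open Complex

/-- A curve `γ` is piecewise continuously differentiable on `[a, b]` if it is continuous
there and `[a, b]` splits into finitely many subintervals on each of which `γ` is `C¹`. -/
def PiecewiseC1On (γ : ℝ → ℂ) (a b : ℝ) : Prop :=
  ContinuousOn γ (Set.Icc a b) ∧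
  ∃ (m : ℕ) (t : ℕ → ℝ), 0 < m ∧ t 0 = a ∧ t m = b ∧
    (∀ k < m, t k < t (k + 1)) ∧
    ∀ k < m, ContDiffOn ℝ 1 γ (Set.Icc (t k) (t (k + 1)))

/-- `h` is a continuous logarithm of `f` along the curve `γ` on `[a, b]`. -/
def IsContinuousLog (f : ℂ → ℂ) (γ : ℝ → ℂ) (a b : ℝ) (h : ℝ → ℂ) : Prop :=
  ContinuousOn h (Set.Icc a b) ∧ ∀ t ∈ Set.Icc a b, Complex.exp (h t) = f (γ t)

/-- The set of branch values of the complex multiplicative integral of `f` along `γ`. -/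
def MInt (f : ℂ → ℂ) (γ : ℝ → ℂ) (a b : ℝ) : Set ℂ :=
  {w | ∃ h : ℝ → ℂ, IsContinuousLog f γ a b h ∧
    w = Complex.exp (∫ t in a..b, h t * deriv γ t)}

/-!
Exponents add: if `h` and `k` are continuous logarithms of `f / g` and `g` along `γ`, then `h + k`
is one of `f`, and conversely differences of logarithms of `f` and `g` are logarithms of `f / g`.
The integral is linear in the logarithm once `γ'` is integrable, so the set equality reduces to the
existence of one continuous logarithm of `g`, obtained by lifting `g ∘ γ` through the covering
`exp : ℂ → ℂ \ {0}`.
-/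

open MeasureTheory Set

theorem intervalIntegrable_deriv_of_contDiffOn {E : Type*} [NormedAddCommGroup E]
    [NormedSpace ℝ E] {f : ℝ → E} {a b : ℝ} (hab : a < b) (hf : ContDiffOn ℝ 1 f (Icc a b)) :
    IntervalIntegrable (deriv f) volume a b := by
  have hcont : ContinuousOn (derivWithin f (Icc a b)) (Icc a b) :=
    hf.continuousOn_derivWithin (uniqueDiffOn_Icc hab) le_rfl
  refine (hcont.intervalIntegrable_of_Icc hab.le).congr_uIoo fun x hx => ?_
  rw [uIoo_of_le hab.le] at hx
  exact derivWithin_of_mem_nhds (Icc_mem_nhds hx.1 hx.2)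

namespace PiecewiseC1On

variable {γ : ℝ → ℂ} {a b : ℝ}

theorem intervalIntegrable_deriv (hγ : PiecewiseC1On γ a b) :
    IntervalIntegrable (deriv γ) volume a b := by
  obtain ⟨-, m, t, -, rfl, rfl, ht, hC⟩ := hγ
  exact IntervalIntegrable.trans_iterate fun k hk =>
    intervalIntegrable_deriv_of_contDiffOn (ht k hk) (hC k hk)

theorem ae_differentiableAt (hγ : PiecewiseC1On γ a b) :
    ∀ᵐ t, t ∈ Ioc a b → DifferentiableAt ℝ γ t := by
  obtain ⟨-, m, t, -, rfl, rfl, -, hC⟩ := hγ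
  have hpartition : ∀ᵐ x, x ∉ range t := (countable_range t).ae_notMem volume
  filter_upwards [hpartition] with x hxt hx
  obtain ⟨k, hk, hxk⟩ : ∃ k < m, x ∈ Ioc (t k) (t (k + 1)) := by
    simpa [and_left_comm] using Ioc_subset_biUnion_Ioc m t hx
  have hlt : x < t (k + 1) := hxk.2.lt_of_ne fun h => hxt ⟨k + 1, h.symm⟩
  exact ((hC k hk).differentiableOn one_ne_zero).differentiableAt (Icc_mem_nhds hxk.1 hlt)

end PiecewiseC1On

theorem exists_isContinuousLog {f : ℂ → ℂ} {γ : ℝ → ℂ} {a b : ℝ} (hab : a ≤ b)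
    (hcont : ContinuousOn (f ∘ γ) (Icc a b)) (hne : ∀ t ∈ Icc a b, f (γ t) ≠ 0) :
    ∃ h, IsContinuousLog f γ a b h := by
  let φ : C(ℝ, ℂ) :=
    ⟨IccExtend hab ((Icc a b).domRestrict (f ∘ γ)), hcont.domRestrict.Icc_extend'⟩
  have hφ : ∀ t, φ t ≠ 0 := fun t => hne _ (projIcc a b hab t).2
  obtain ⟨h, ⟨-, hexp⟩, -⟩ := Complex.isCoveringMapOn_exp.existsUnique_continuousMap_lifts φ
    (Complex.exp_log (hφ a)) hφ
  refine ⟨h, h.continuous.continuousOn, fun t ht => ?_⟩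
  calc Complex.exp (h t) = φ t := congrFun hexp t
    _ = f (γ t) := IccExtend_of_mem hab ((Icc a b).domRestrict (f ∘ γ)) ht

namespace IsContinuousLog

variable {f g : ℂ → ℂ} {γ h k : ℝ → ℂ} {a b : ℝ}

theorem continuousOn_uIcc (hab : a ≤ b) (hh : IsContinuousLog f γ a b h) :
    ContinuousOn h (uIcc a b) :=
  uIcc_of_le hab ▸ hh.1

theorem sub (hh : IsContinuousLog f γ a b h) (hk : IsContinuousLog g γ a b k) :
    IsContinuousLog (fun z => f z / g z) γ a b (h - k) :=
  ⟨hh.1.sub hk.1, fun t ht => by rw [Pi.sub_apply, Complex.exp_sub, hh.2 t ht, hk.2 t ht]⟩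

theorem add_of_div (hh : IsContinuousLog (fun z => f z / g z) γ a b h)
    (hk : IsContinuousLog g γ a b k) : IsContinuousLog f γ a b (h + k) := by
  refine ⟨hh.1.add hk.1, fun t ht => ?_⟩
  have hg : g (γ t) ≠ 0 := hk.2 t ht ▸ Complex.exp_ne_zero (k t)
  rw [Pi.add_apply, Complex.exp_add, hh.2 t ht, hk.2 t ht, div_mul_cancel₀ _ hg]

end IsContinuousLog

theorem exp_integral_sub_mul {μ : Measure ℝ} {h k φ : ℝ → ℂ} {a b : ℝ}
    (hφ : IntervalIntegrable φ μ a b) (hh : ContinuousOn h (uIcc a b))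
    (hk : ContinuousOn k (uIcc a b)) :
    Complex.exp (∫ t in a..b, (h - k) t * φ t ∂μ) =
      Complex.exp (∫ t in a..b, h t * φ t ∂μ) / Complex.exp (∫ t in a..b, k t * φ t ∂μ) := by
  simp only [Pi.sub_apply, sub_mul]
  rw [intervalIntegral.integral_sub (hφ.continuousOn_mul hh) (hφ.continuousOn_mul hk),
    Complex.exp_sub]

theorem multiplicative_integral_div_general {a b : ℝ} (hab : a ≤ b) {γ γ' : ℝ → ℂ}
    (hγ : ∀ᵐ t, t ∈ Ioc a b → HasDerivAt γ (γ' t) t) (hγ' : IntervalIntegrable γ' volume a b)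
    {f g : ℂ → ℂ} (hg : ContinuousOn (g ∘ γ) (Icc a b)) (hgne : ∀ t ∈ Icc a b, g (γ t) ≠ 0) :
    MInt (fun z => f z / g z) γ a b =
      {w | ∃ w₁ ∈ MInt f γ a b, ∃ w₂ ∈ MInt g γ a b, w = w₁ / w₂} := by
  have hderiv : IntervalIntegrable (deriv γ) volume a b := by
    refine hγ'.congr_ae ?_
    rw [uIoc_of_le hab]
    exact (ae_restrict_iff' measurableSet_Ioc).2 (hγ.mono fun t ht hmem => (ht hmem).deriv.symm)
  ext w
  constructor
  · rintro ⟨h, hh, rfl⟩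
    obtain ⟨k, hk⟩ := exists_isContinuousLog hab hg hgne
    have hhk : IsContinuousLog f γ a b (h + k) := hh.add_of_div hk
    refine ⟨_, ⟨h + k, hhk, rfl⟩, _, ⟨k, hk, rfl⟩, ?_⟩
    rw [← exp_integral_sub_mul hderiv (hhk.continuousOn_uIcc hab) (hk.continuousOn_uIcc hab),
      add_sub_cancel_right]
  · rintro ⟨_, ⟨h, hh, rfl⟩, _, ⟨k, hk, rfl⟩, rfl⟩
    exact ⟨h - k, hh.sub hk, (exp_integral_sub_mul hderiv (hh.continuousOn_uIcc hab)
      (hk.continuousOn_uIcc hab)).symm⟩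

/-- Theorem 7 (division property): the complex multiplicative integral of a quotient is the
set quotient of the complex multiplicative integrals:
`MInt (f/g, γ) = { w₁/w₂ : w₁ ∈ MInt (f, γ), w₂ ∈ MInt (g, γ) }`. -/
theorem multiplicative_integral_div
    (a b : ℝ) (hab : a < b)
    (γ : ℝ → ℂ) (hγ : PiecewiseC1On γ a b)
    (U : Set ℂ) (hU : IsOpen U) (hγU : ∀ t ∈ Set.Icc a b, γ t ∈ U)
    (f g : ℂ → ℂ) (hf : ContinuousOn f U) (hg : ContinuousOn g U)
    (hfne : ∀ z ∈ U, f z ≠ 0) (hgne : ∀ z ∈ U, g z ≠ 0) :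
    MInt (fun z => f z / g z) γ a b =
      {w | ∃ w₁ ∈ MInt f γ a b, ∃ w₂ ∈ MInt g γ a b, w = w₁ / w₂} :=
  multiplicative_integral_div_general hab.le
    (hγ.ae_differentiableAt.mono fun _ hdiff ht => (hdiff ht).hasDerivAt)
    hγ.intervalIntegrable_deriv (hg.comp hγ.1 hγU) fun t ht => hgne (γ t) (hγU t ht)
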